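/- Let t₁ = 2π − 2·arctan(e^π) and t₂ = 2π − 2·arctan(e^{−π}). Then π < t₁ < t₂ < 2π, and the boundary values of Φ(ζ) = (1/π)·Log((1+ζ)/(1−ζ)) + i/2 (principal branch Log) satisfy Φ(e^{it₁}) = −1 and Φ(e^{it₂}) = 1. -/

import Mathlib

open Complex Real

lemma aux_ratio (x : ℝ) :
    (1 + Complex.exp (Complex.I * ((2 * π - 2 * Real.arctan (Real.exp x) : ℝ) : ℂ))) /
      (1 - Complex.exp (Complex.I * ((2 * π - 2 * Real.arctan (Real.exp x) : ℝ) : ℂ)))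
      = Complex.exp (((-x : ℝ) : ℂ) + ((-(π / 2) : ℝ) : ℂ) * Complex.I) := by
  set θ := Real.arctan (Real.exp x) with hθ
  have hc : 0 < Real.cos θ := Real.cos_arctan_pos _
  have ht : Real.tan θ = Real.exp x := Real.tan_arctan _
  have hs : Real.sin θ = Real.exp x * Real.cos θ := by
    rw [← ht, Real.tan_mul_cos hc.ne']
  have hspos : 0 < Real.sin θ := by rw [hs]; positivity
  have hsq := Real.sin_sq_add_cos_sq θ
  have hE : Complex.exp (Complex.I * ((2 * π - 2 * θ : ℝ) : ℂ))
      = ((Real.cos θ : ℂ) - (Real.sin θ : ℂ) * Complex.I) ^ 2 := by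
    have h1 : Complex.I * ((2 * π - 2 * θ : ℝ) : ℂ)
        = ((-θ : ℝ) : ℂ) * Complex.I + ((-θ : ℝ) : ℂ) * Complex.I + 2 * π * Complex.I := by
      push_cast; ring
    rw [h1, Complex.exp_periodic, Complex.exp_add, Complex.exp_mul_I,
      ← Complex.ofReal_cos, ← Complex.ofReal_sin, Real.cos_neg, Real.sin_neg]
    push_cast; ring
  have hR : Complex.exp (((-x : ℝ) : ℂ) + ((-(π / 2) : ℝ) : ℂ) * Complex.I)
      = -((Real.exp (-x) : ℝ) : ℂ) * Complex.I := by
    rw [Complex.exp_add, Complex.exp_mul_I, ← Complex.ofReal_cos, ← Complex.ofReal_sin,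
      Real.cos_neg, Real.sin_neg, Real.cos_pi_div_two, Real.sin_pi_div_two]
    push_cast; ring
  rw [hE, hR]
  have hex : Real.exp (-x) * Real.exp x = 1 := by rw [← Real.exp_add]; simp
  have hcs : Real.cos θ = Real.exp (-x) * Real.sin θ := by
    rw [hs, ← mul_assoc, hex, one_mul]
  generalize Real.cos θ = c at *
  generalize Real.sin θ = s at *
  generalize Real.exp (-x) = y at *
  have hsqC : (s : ℂ) ^ 2 + (c : ℂ) ^ 2 = 1 := by exact_mod_cast hsq
  have hcsC : (c : ℂ) = y * s := by exact_mod_cast hcs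
  have hden : (1 : ℂ) - ((c : ℂ) - s * Complex.I) ^ 2 = 2 * s * (s + c * Complex.I) := by
    linear_combination (-1 : ℂ) * hsqC - (s : ℂ) ^ 2 * Complex.I_sq
  have hnum : (1 : ℂ) + ((c : ℂ) - s * Complex.I) ^ 2 = 2 * c * (c - s * Complex.I) := by
    linear_combination (-1 : ℂ) * hsqC + (s : ℂ) ^ 2 * Complex.I_sq
  have hs0 : (s : ℂ) ≠ 0 := by exact_mod_cast hspos.ne'
  have hz : (s : ℂ) + c * Complex.I ≠ 0 := by
    intro h
    have := congrArg Complex.re h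
    simp at this
    exact hspos.ne' this
  rw [hden, hnum, div_eq_iff (mul_ne_zero (mul_ne_zero two_ne_zero hs0) hz)]
  linear_combination (2 * (c - s * Complex.I)) * hcsC + 2 * y * s * c * Complex.I_sq

lemma aux_log (x : ℝ) :
    (1 / (π : ℂ)) * Complex.log
      ((1 + Complex.exp (Complex.I * ((2 * π - 2 * Real.arctan (Real.exp x) : ℝ) : ℂ))) /
      (1 - Complex.exp (Complex.I * ((2 * π - 2 * Real.arctan (Real.exp x) : ℝ) : ℂ)))) +
      Complex.I / 2 = -(x : ℂ) / π := by
  have hp := Real.pi_pos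
  have hpC : (π : ℂ) ≠ 0 := by exact_mod_cast hp.ne'
  rw [aux_ratio, Complex.log_exp]
  · push_cast; field_simp; ring
  · simp; linarith
  · simp; linarith

/-- With `t₁ = 2π − 2·arctan(e^π)` and `t₂ = 2π − 2·arctan(e^{−π})`, one has
`π < t₁ < t₂ < 2π`, and the boundary values of
`Φ(ζ) = (1/π)·Log((1+ζ)/(1−ζ)) + i/2` satisfy `Φ(e^{it₁}) = −1`, `Φ(e^{it₂}) = 1`. -/
theorem stmt_14 :
    π < 2 * π - 2 * Real.arctan (Real.exp π) ∧
    2 * π - 2 * Real.arctan (Real.exp π) < 2 * π - 2 * Real.arctan (Real.exp (-π)) ∧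
    2 * π - 2 * Real.arctan (Real.exp (-π)) < 2 * π ∧
    (1 / (π : ℂ)) *
        Complex.log
          ((1 + Complex.exp (Complex.I * ((2 * π - 2 * Real.arctan (Real.exp π) : ℝ) : ℂ))) /
            (1 - Complex.exp (Complex.I * ((2 * π - 2 * Real.arctan (Real.exp π) : ℝ) : ℂ)))) +
      Complex.I / 2 = -1 ∧
    (1 / (π : ℂ)) *
        Complex.log
          ((1 + Complex.exp (Complex.I * ((2 * π - 2 * Real.arctan (Real.exp (-π)) : ℝ) : ℂ))) /
            (1 - Complex.exp (Complex.I * ((2 * π - 2 * Real.arctan (Real.exp (-π)) : ℝ) : ℂ)))) +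
      Complex.I / 2 = 1 := by
  have hp := Real.pi_pos
  have hpC : (π : ℂ) ≠ 0 := by exact_mod_cast hp.ne'
  refine ⟨?_, ?_, ?_, ?_, ?_⟩
  · have := Real.arctan_lt_pi_div_two (Real.exp π)
    linarith
  · have : Real.arctan (Real.exp (-π)) < Real.arctan (Real.exp π) :=
      Real.arctan_strictMono (Real.exp_lt_exp.2 (by linarith))
    linarith
  · have : 0 < Real.arctan (Real.exp (-π)) := Real.arctan_pos.2 (Real.exp_pos _)
    linarith
  · rw [aux_log, neg_div, div_self hpC]
  · rw [aux_log]
    push_cast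
    rw [neg_neg, div_self hpC]
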